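/- If L₁ and L₂ are languages over α each closed under permutation of letters (i.e., if w ∈ Lᵢ and w' is a permutation of w then w' ∈ Lᵢ), then the shuffle L₁ ⧢ L₂ is closed under permutation of letters. -/

import Mathlib

/-- `IsShuffle u v w` holds iff `w` is an interleaving of `u` and `v`,
i.e. `w = u₁v₁u₂v₂⋯uₙvₙ` for some decompositions `u = u₁⋯uₙ`, `v = v₁⋯vₙ`. -/
inductive IsShuffle {α : Type*} : List α → List α → List α → Prop
  | nil : IsShuffle [] [] []
  | left {a : α} {u v w : List α} : IsShuffle u v w → IsShuffle (a :: u) v (a :: w)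
  | right {a : α} {u v w : List α} : IsShuffle u v w → IsShuffle u (a :: v) (a :: w)

/-- The shuffle `u ⧢ v` of two words, as a set of words. -/
def wordShuffle {α : Type*} (u v : List α) : Set (List α) := {w | IsShuffle u v w}

/-- The shuffle of two languages. -/
def langShuffle {α : Type*} (L₁ L₂ : Set (List α)) : Set (List α) :=
  ⋃ u ∈ L₁, ⋃ v ∈ L₂, wordShuffle u v

/-!
If `w` is a permutation of `u ++ v`, then some permutation of `u` is a subword of `w`, and by
cancellation the letters of `w` outside this subword form a permutation of `v`. Hence the shuffle
of two permutation-closed languages is the permutation closure of their concatenation.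
-/

section

open scoped List

variable {α : Type*} {u v w : List α} {L₁ L₂ : Set (List α)}

theorem IsShuffle.append_perm (h : IsShuffle u v w) : u ++ v ~ w := by
  induction h with
  | nil => exact .rfl
  | left _ ih => exact ih.cons _
  | right _ ih => exact List.perm_middle.trans (ih.cons _)

theorem IsShuffle.exists_of_sublist (h : u <+ w) : ∃ v, IsShuffle u v w := by
  induction h with
  | slnil => exact ⟨[], .nil⟩
  | cons a _ ih =>
    obtain ⟨v, hv⟩ := ih
    exact ⟨a :: v, hv.right⟩
  | cons_cons _ _ ih =>
    obtain ⟨v, hv⟩ := ih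
    exact ⟨v, hv.left⟩

theorem IsShuffle.exists_perm_of_append_perm (h : u ++ v ~ w) :
    ∃ u' v', u ~ u' ∧ v ~ v' ∧ IsShuffle u' v' w := by
  have u_subperm_w : u <+~ w := (List.sublist_append_left u v).subperm.trans h.subperm
  obtain ⟨u', u'_perm_u, u'_sublist_w⟩ := u_subperm_w
  obtain ⟨v', shuffle_w⟩ := IsShuffle.exists_of_sublist u'_sublist_w
  have append_perm_append : u ++ v ~ u ++ v' :=
    calc
      u ++ v ~ w := h
      _ ~ u' ++ v' := shuffle_w.append_perm.symm
      _ ~ u ++ v' := u'_perm_u.append_right v'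
  exact ⟨u', v', u'_perm_u.symm, (List.perm_append_left_iff u).mp append_perm_append, shuffle_w⟩

theorem mem_langShuffle : w ∈ langShuffle L₁ L₂ ↔ ∃ u ∈ L₁, ∃ v ∈ L₂, IsShuffle u v w := by
  simp [langShuffle, wordShuffle]

theorem mem_langShuffle_iff_exists_append_perm
    (h₁ : ∀ w ∈ L₁, ∀ w', w ~ w' → w' ∈ L₁) (h₂ : ∀ w ∈ L₂, ∀ w', w ~ w' → w' ∈ L₂) :
    w ∈ langShuffle L₁ L₂ ↔ ∃ u ∈ L₁, ∃ v ∈ L₂, u ++ v ~ w := by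
  rw [mem_langShuffle]
  constructor
  · rintro ⟨u, hu, v, hv, shuffle_w⟩
    exact ⟨u, hu, v, hv, shuffle_w.append_perm⟩
  · rintro ⟨u, hu, v, hv, append_perm_w⟩
    obtain ⟨u', v', u_perm_u', v_perm_v', shuffle_w⟩ :=
      IsShuffle.exists_perm_of_append_perm append_perm_w
    exact ⟨u', h₁ u hu u' u_perm_u', v', h₂ v hv v' v_perm_v', shuffle_w⟩

end

/-- the shuffle of two permutation-closed languages is
permutation-closed. -/
theorem stmt_6 {α : Type*} (L₁ L₂ : Set (List α))
    (h₁ : ∀ w ∈ L₁, ∀ w' : List α, w.Perm w' → w' ∈ L₁)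
    (h₂ : ∀ w ∈ L₂, ∀ w' : List α, w.Perm w' → w' ∈ L₂) :
    ∀ w ∈ langShuffle L₁ L₂, ∀ w' : List α, w.Perm w' → w' ∈ langShuffle L₁ L₂ := by
  intro w hw w' w_perm_w'
  rw [mem_langShuffle_iff_exists_append_perm h₁ h₂] at hw ⊢
  obtain ⟨u, hu, v, hv, append_perm_w⟩ := hw
  exact ⟨u, hu, v, hv, append_perm_w.trans w_perm_w'⟩
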